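/- arXiv:1104.1872 — 3 statements merged into one kernel-verified Lean document; each statement's English description precedes it below -/
import Mathlib

section
/- Let 𝒢 be a group structure on {1,…,p} with positive weights (η_g), let Ω(w) = Σ_{g∈𝒢} η_g ‖w_g‖_∞, let λ > 0 and u ∈ ℝ^p. If ξ* = (ξ*^g)_{g∈𝒢} is a minimizer of ½‖u − Σ_{g∈𝒢} ξ^g‖₂² over all families ξ = (ξ^g)_{g∈𝒢} of vectors in ℝ^p satisfying ξ^g_j = 0 for j ∉ g and ‖ξ^g‖₁ ≤ λη_g for every g ∈ 𝒢, then w* := u − Σ_{g∈𝒢} ξ*^g is the unique minimizer of w ↦ ½‖u − w‖₂² + λΩ(w) over ℝ^p. -/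
/-!
The function `λ Ω` is the support function `w ↦ sup_{v ∈ K} ⟪v, w⟫` of the convex set `K` of sums
`∑ g ∈ 𝒢, ξ^g` of dual-feasible families: on each group this is the duality between the `ℓ₁`- and
the `ℓ∞`-norm. The dual problem projects `u` onto `K`. If `s` is the projection, the obtuse angle
criterion says that `s` attains the supremum in direction `u - s`, and hence for `h = λ Ω` and
every `w`, the objective at `w` exceeds the one at `u - s` by at least `½‖w - (u - s)‖²`.
-/

open Finset

/-- The ℓ∞-norm of the subvector of `w` indexed by the group `g`
(equal to `max_{j ∈ g} |w j|` for nonempty `g`, and `0` for empty `g`). -/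
noncomputable def gsup {p : ℕ} (g : Finset (Fin p)) (w : Fin p → ℝ) : ℝ :=
  ↑(g.sup fun j => Real.nnabs (w j))

/-- The structured norm `Ω(w) = ∑_{g ∈ 𝒢} η_g ‖w_g‖_∞`. -/
noncomputable def Omega {p : ℕ} (G : Finset (Finset (Fin p)))
    (η : Finset (Fin p) → ℝ) (w : Fin p → ℝ) : ℝ :=
  ∑ g ∈ G, η g * gsup g w

/-- ℓ₁-norm of a vector. -/
def l1 {p : ℕ} (v : Fin p → ℝ) : ℝ := ∑ j, |v j|

/-- A family `ξ = (ξ^g)_{g ∈ 𝒢}` is dual-feasible at level `lam` if `ξ^g_j = 0` for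
`j ∉ g` and `‖ξ^g‖₁ ≤ lam * η_g` for every `g ∈ 𝒢`. -/
def DualFeasible {p : ℕ} (G : Finset (Finset (Fin p))) (η : Finset (Fin p) → ℝ)
    (lam : ℝ) (ξ : Finset (Fin p) → Fin p → ℝ) : Prop :=
  ∀ g ∈ G, (∀ j, j ∉ g → ξ g j = 0) ∧ l1 (ξ g) ≤ lam * η g

/-- Primal (proximal) objective `½‖u − w‖₂² + λ Ω(w)`. -/
noncomputable def proxObj {p : ℕ} (G : Finset (Finset (Fin p)))
    (η : Finset (Fin p) → ℝ) (lam : ℝ) (u w : Fin p → ℝ) : ℝ :=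
  (1/2) * ∑ j, (u j - w j)^2 + lam * Omega G η w

/-- Dual objective `½‖u − ∑_{g} ξ^g‖₂²`. -/
noncomputable def dualObj {p : ℕ} (G : Finset (Finset (Fin p))) (u : Fin p → ℝ)
    (ξ : Finset (Fin p) → Fin p → ℝ) : ℝ :=
  (1/2) * ∑ j, (u j - ∑ g ∈ G, ξ g j)^2

section SupportFunction

variable {E : Type*} [NormedAddCommGroup E] [InnerProductSpace ℝ E] {K : Set E} {h : E → ℝ}
  {s u : E}

/-- `h` is the support function `w ↦ sup_{v ∈ K} ⟪v, w⟫` of `K`. Being a predicate on real-valued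
functions, it also says that each of these suprema is finite. -/
def IsSupportFunction (K : Set E) (h : E → ℝ) : Prop :=
  ∀ w, IsLUB ((fun v => inner ℝ v w) '' K) (h w)

theorem inner_sub_le_of_isMinOn_norm_sub (hK : Convex ℝ K) (hs : s ∈ K)
    (hmin : IsMinOn (fun v => ‖u - v‖) K s) {v : E} (hv : v ∈ K) :
    inner ℝ v (u - s) ≤ inner ℝ s (u - s) := by
  have norm_eq_iInf : ‖u - s‖ = ⨅ v : K, ‖u - v‖ := (hmin.iInf_eq hs).symm
  have obtuse := (norm_eq_iInf_iff_real_inner_le_zero hK hs).mp norm_eq_iInf v hv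
  rwa [real_inner_comm, inner_sub_left, sub_nonpos] at obtuse

theorem IsSupportFunction.quadratic_growth_sub (hh : IsSupportFunction K h) (hK : Convex ℝ K)
    (hs : s ∈ K) (hmin : IsMinOn (fun v => ‖u - v‖) K s) (w : E) :
    1 / 2 * ‖u - (u - s)‖ ^ 2 + h (u - s) + 1 / 2 * ‖w - (u - s)‖ ^ 2 ≤
      1 / 2 * ‖u - w‖ ^ 2 + h w := by
  have le_h : inner ℝ s w ≤ h w := (hh w).1 (Set.mem_image_of_mem _ hs)
  have h_le : h (u - s) ≤ inner ℝ s (u - s) :=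
    (hh (u - s)).2 <| Set.forall_mem_image.2 fun _ hv =>
      inner_sub_le_of_isMinOn_norm_sub hK hs hmin hv
  have expand : ‖u - w‖ ^ 2 =
      ‖s‖ ^ 2 - 2 * (inner ℝ s w - inner ℝ s (u - s)) + ‖w - (u - s)‖ ^ 2 := by
    rw [← inner_sub_right, ← norm_sub_sq_real]
    congr 2
    abel
  rw [sub_sub_cancel, expand]
  linarith

theorem IsSupportFunction.prox_lt_of_ne_sub (hh : IsSupportFunction K h) (hK : Convex ℝ K)
    (hs : s ∈ K) (hmin : IsMinOn (fun v => ‖u - v‖) K s) {w : E} (hw : w ≠ u - s) :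
    1 / 2 * ‖u - (u - s)‖ ^ 2 + h (u - s) < 1 / 2 * ‖u - w‖ ^ 2 + h w := by
  have growth := hh.quadratic_growth_sub hK hs hmin w
  have gap_pos : 0 < 1 / 2 * ‖w - (u - s)‖ ^ 2 :=
    mul_pos one_half_pos (pow_pos (norm_sub_pos_iff.2 hw) 2)
  exact (lt_add_of_pos_right _ gap_pos).trans_le growth

end SupportFunction

section GroupBall

variable {p : ℕ} {g : Finset (Fin p)} {r : ℝ}

/-- The ball of radius `r` of the dual of the seminorm `gsup g`: the vectors supported in `g` with
`ℓ₁`-norm at most `r`. A family is dual-feasible when each `ξ^g` lies in `groupBall g (λ η_g)`. -/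
def groupBall (g : Finset (Fin p)) (r : ℝ) : Set (Fin p → ℝ) :=
  {v | (∀ j, j ∉ g → v j = 0) ∧ l1 v ≤ r}

theorem convexOn_l1 : ConvexOn ℝ Set.univ (l1 : (Fin p → ℝ) → ℝ) := by
  refine ⟨convex_univ, fun v _ w _ a b ha hb _ => ?_⟩
  simp only [l1, smul_eq_mul, mul_sum, ← sum_add_distrib]
  refine sum_le_sum fun j _ => (abs_add_le _ _).trans_eq ?_
  simp only [Pi.smul_apply, smul_eq_mul, abs_mul, abs_of_nonneg ha, abs_of_nonneg hb]

theorem convex_groupBall : Convex ℝ (groupBall g r) := by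
  intro v hv w hw a b ha hb hab
  refine ⟨fun j hj => by simp [hv.1 j hj, hw.1 j hj], ?_⟩
  exact (convexOn_l1.convex_le r ⟨Set.mem_univ v, hv.2⟩ ⟨Set.mem_univ w, hw.2⟩ ha hb hab).2

theorem gsup_nonneg (g : Finset (Fin p)) (w : Fin p → ℝ) : 0 ≤ gsup g w :=
  NNReal.coe_nonneg _

theorem abs_le_gsup {j : Fin p} (hj : j ∈ g) (w : Fin p → ℝ) : |w j| ≤ gsup g w :=
  NNReal.coe_le_coe.2 (le_sup (f := fun j => Real.nnabs (w j)) hj)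

theorem exists_mem_gsup_eq_abs (hg : g.Nonempty) (w : Fin p → ℝ) : ∃ j ∈ g, gsup g w = |w j| := by
  obtain ⟨j, hj, hsup⟩ := exists_mem_eq_sup g hg fun j => Real.nnabs (w j)
  exact ⟨j, hj, congrArg NNReal.toReal hsup⟩

theorem dotProduct_le_mul_gsup {v : Fin p → ℝ} (hv : v ∈ groupBall g r) (w : Fin p → ℝ) :
    v ⬝ᵥ w ≤ r * gsup g w := by
  have term_le (j : Fin p) : v j * w j ≤ |v j| * gsup g w := by
    by_cases hj : j ∈ g
    · calc v j * w j ≤ |v j| * |w j| := (le_abs_self _).trans_eq (abs_mul _ _)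
        _ ≤ |v j| * gsup g w := by gcongr; exact abs_le_gsup hj w
    · simp [hv.1 j hj]
  calc v ⬝ᵥ w ≤ l1 v * gsup g w := (sum_le_sum fun j _ => term_le j).trans_eq (sum_mul ..).symm
    _ ≤ r * gsup g w := mul_le_mul_of_nonneg_right hv.2 (gsup_nonneg g w)

theorem l1_single (k : Fin p) (a : ℝ) : l1 (Pi.single k a) = |a| := by
  simp [l1, Pi.single_apply, apply_ite abs]

theorem exists_mem_groupBall_dotProduct_eq (hr : 0 ≤ r) (w : Fin p → ℝ) :
    ∃ v ∈ groupBall g r, v ⬝ᵥ w = r * gsup g w := by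
  rcases g.eq_empty_or_nonempty with rfl | hg
  · exact ⟨0, ⟨fun _ _ => rfl, by simpa [l1] using hr⟩, by simp [gsup]⟩
  obtain ⟨k, hk, hmax⟩ := exists_mem_gsup_eq_abs hg w
  have abs_sign_le_one : |(SignType.sign (w k) : ℝ)| ≤ 1 := by
    cases SignType.sign (w k) <;> simp
  refine ⟨Pi.single k (r * SignType.sign (w k)), ⟨fun j hj => ?_, ?_⟩, ?_⟩
  · exact Pi.single_eq_of_ne (ne_of_mem_of_not_mem hk hj).symm _
  · rw [l1_single, abs_mul, abs_of_nonneg hr]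
    exact mul_le_of_le_one_right hr abs_sign_le_one
  · rw [single_dotProduct, mul_assoc, sign_mul_self, hmax]

end GroupBall

section Duality

variable {p : ℕ} {G : Finset (Finset (Fin p))} {η : Finset (Fin p) → ℝ} {lam : ℝ}

/-- The set of sums `∑ g ∈ 𝒢, ξ^g` of dual-feasible families, over which the dual problem looks for
the point nearest to `u` in the Euclidean norm. -/
def dualSums (G : Finset (Finset (Fin p))) (η : Finset (Fin p) → ℝ) (lam : ℝ) :
    Set (EuclideanSpace ℝ (Fin p)) :=
  (fun ξ => WithLp.toLp 2 (∑ g ∈ G, ξ g)) '' {ξ | DualFeasible G η lam ξ}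

theorem convex_setOf_dualFeasible : Convex ℝ {ξ | DualFeasible G η lam ξ} :=
  convex_pi (s := (G : Set (Finset (Fin p)))) (t := fun g => groupBall g (lam * η g))
    fun _ _ => convex_groupBall

theorem convex_dualSums : Convex ℝ (dualSums G η lam) :=
  convex_setOf_dualFeasible.is_linear_image
    { map_add := fun ξ ζ => by simp [sum_add_distrib]
      map_smul := fun c ξ => by simp [smul_sum] }

theorem dotProduct_sum_le_mul_Omega {ξ : Finset (Fin p) → Fin p → ℝ} (hξ : DualFeasible G η lam ξ)
    (w : Fin p → ℝ) : (∑ g ∈ G, ξ g) ⬝ᵥ w ≤ lam * Omega G η w := by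
  simp only [sum_dotProduct, Omega, mul_sum, ← mul_assoc]
  exact sum_le_sum fun g hg => dotProduct_le_mul_gsup (hξ g hg) w

theorem exists_dualFeasible_dotProduct_sum_eq (hr : ∀ g ∈ G, 0 ≤ lam * η g) (w : Fin p → ℝ) :
    ∃ ξ, DualFeasible G η lam ξ ∧ (∑ g ∈ G, ξ g) ⬝ᵥ w = lam * Omega G η w := by
  choose! ξ hξ hdot using fun g hg => exists_mem_groupBall_dotProduct_eq (g := g) (hr g hg) w
  refine ⟨ξ, hξ, ?_⟩
  simp only [sum_dotProduct, Omega, mul_sum, ← mul_assoc]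
  exact sum_congr rfl hdot

theorem isSupportFunction_dualSums (hr : ∀ g ∈ G, 0 ≤ lam * η g) :
    IsSupportFunction (dualSums G η lam) fun w => lam * Omega G η w.ofLp := by
  intro w
  have inner_eq (v : Fin p → ℝ) : inner ℝ (WithLp.toLp 2 v) w = v ⬝ᵥ w.ofLp := by
    simp [EuclideanSpace.inner_eq_star_dotProduct, dotProduct_comm]
  refine IsGreatest.isLUB ⟨?_, ?_⟩
  · obtain ⟨ξ, hξ, hdot⟩ := exists_dualFeasible_dotProduct_sum_eq hr w.ofLp
    exact ⟨_, ⟨ξ, hξ, rfl⟩, (inner_eq _).trans hdot⟩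
  · rintro _ ⟨_, ⟨ξ, hξ, rfl⟩, rfl⟩
    exact (inner_eq _).trans_le (dotProduct_sum_le_mul_Omega hξ w.ofLp)

theorem proxObj_eq_norm_sq (u w : Fin p → ℝ) :
    proxObj G η lam u w =
      1 / 2 * ‖WithLp.toLp 2 u - WithLp.toLp 2 w‖ ^ 2 + lam * Omega G η w := by
  simp [proxObj, EuclideanSpace.real_norm_sq_eq]

theorem dualObj_eq_norm_sq (u : Fin p → ℝ) (ξ : Finset (Fin p) → Fin p → ℝ) :
    dualObj G u ξ = 1 / 2 * ‖WithLp.toLp 2 u - WithLp.toLp 2 (∑ g ∈ G, ξ g)‖ ^ 2 := by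
  simp [dualObj, EuclideanSpace.real_norm_sq_eq]

theorem isMinOn_norm_sub_dualSums {u : Fin p → ℝ} {ξs : Finset (Fin p) → Fin p → ℝ}
    (hmin : ∀ ξ, DualFeasible G η lam ξ → dualObj G u ξs ≤ dualObj G u ξ) :
    IsMinOn (fun v => ‖WithLp.toLp 2 u - v‖) (dualSums G η lam)
      (WithLp.toLp 2 (∑ g ∈ G, ξs g)) := by
  rintro _ ⟨ξ, hξ, rfl⟩
  have obj_le := hmin ξ hξ
  rw [dualObj_eq_norm_sq, dualObj_eq_norm_sq] at obj_le
  exact le_of_sq_le_sq (by linarith) (norm_nonneg _)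

end Duality

/-- if `ξ*` minimizes the dual objective over dual-feasible families,
then `w* = u − ∑_g ξ*^g` is the unique minimizer of `w ↦ ½‖u−w‖₂² + λΩ(w)`. -/
theorem stmt0 {p : ℕ} (G : Finset (Finset (Fin p))) (η : Finset (Fin p) → ℝ)
    (hne : ∀ g ∈ G, g.Nonempty) (hη : ∀ g ∈ G, 0 < η g)
    (lam : ℝ) (hlam : 0 < lam) (u : Fin p → ℝ)
    (ξs : Finset (Fin p) → Fin p → ℝ)
    (hfeas : DualFeasible G η lam ξs)
    (hmin : ∀ ξ : Finset (Fin p) → Fin p → ℝ, DualFeasible G η lam ξ →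
      dualObj G u ξs ≤ dualObj G u ξ) :
    (∀ w : Fin p → ℝ,
        proxObj G η lam u (fun j => u j - ∑ g ∈ G, ξs g j) ≤ proxObj G η lam u w) ∧
    (∀ w : Fin p → ℝ,
        proxObj G η lam u w ≤ proxObj G η lam u (fun j => u j - ∑ g ∈ G, ξs g j) →
        w = fun j => u j - ∑ g ∈ G, ξs g j) := by
  have radius_nonneg : ∀ g ∈ G, 0 ≤ lam * η g := fun g hg => (mul_pos hlam (hη g hg)).le
  have sub_eq : WithLp.toLp 2 (fun j => u j - ∑ g ∈ G, ξs g j) =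
      WithLp.toLp 2 u - WithLp.toLp 2 (∑ g ∈ G, ξs g) := by
    ext j
    simp
  have prox_lt (w : Fin p → ℝ) (hw : w ≠ fun j => u j - ∑ g ∈ G, ξs g j) :
      proxObj G η lam u (fun j => u j - ∑ g ∈ G, ξs g j) < proxObj G η lam u w := by
    have strict := (isSupportFunction_dualSums radius_nonneg).prox_lt_of_ne_sub convex_dualSums
      ⟨ξs, hfeas, rfl⟩ (isMinOn_norm_sub_dualSums hmin)
      (sub_eq ▸ (WithLp.toLp_injective 2).ne hw)
    rwa [← sub_eq, ← proxObj_eq_norm_sq, ← proxObj_eq_norm_sq] at strict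
  refine ⟨fun w => ?_, fun w hw => ?_⟩
  · rcases eq_or_ne w (fun j => u j - ∑ g ∈ G, ξs g j) with rfl | hne_min
    · exact le_rfl
    · exact (prox_lt w hne_min).le
  · by_contra hne_min
    exact hw.not_gt (prox_lt w hne_min)
end

section
/- Let 𝒢 be a partition of {1,…,p} into nonempty groups, let λ > 0 and u ∈ ℝ^p, and let Ω(w) = Σ_{g∈𝒢} ‖w_g‖_∞. Then the unique minimizer w* of w ↦ ½‖u − w‖₂² + λΩ(w) is given groupwise by w*_g = u_g − Π_{‖·‖₁ ≤ λ}(u_g) for every g ∈ 𝒢, where Π_{‖·‖₁ ≤ λ}(u_g) denotes the Euclidean orthogonal projection of u_g onto the ℓ₁-ball of radius λ; in particular w*_g = 0 whenever ‖u_g‖₁ ≤ λ. -/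
open Finset

/-!
The penalty `r ∑_g ‖w_g‖_∞` is the support function of the product over the groups of the
`ℓ₁`-balls of radius `r`, because `ℓ₁` and `ℓ_∞` are dual.  By Moreau's decomposition the minimizer
of `½‖u - w‖² + σ_K(w)` is `u - Π_K(u)`: the variational inequality of the projection says exactly
that the supremum defining `σ_K(u - Π_K(u))` is attained at `Π_K(u)`.  Since `K` is a product, its
projection acts on each group separately.
-/

open scoped NNReal RealInnerProductSpace

section Moreau

variable {E : Type*} [NormedAddCommGroup E] [InnerProductSpace ℝ E]

/-- The objective `½‖u - w‖² + φ w` whose minimizer over `w` is the proximal point of `φ` at `u`. -/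
noncomputable def proxObjective (φ : E → ℝ) (u w : E) : ℝ :=
  (1 / 2) * ‖u - w‖ ^ 2 + φ w

lemma exists_mem_forall_inner_sub_le_zero {K : Set E} (hne : K.Nonempty) (hcomplete : IsComplete K)
    (hconv : Convex ℝ K) (u : E) : ∃ π ∈ K, ∀ v ∈ K, ⟪u - π, v - π⟫ ≤ 0 := by
  obtain ⟨π, hπ, hdist⟩ := exists_norm_eq_iInf_of_complete_convex hne hcomplete hconv u
  exact ⟨π, hπ, (norm_eq_iInf_iff_real_inner_le_zero hconv hπ).1 hdist⟩

variable {K : Set E} {σ : E → ℝ} {u π : E}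

lemma support_sub_le_inner (hσ : IsLUB ((⟪·, u - π⟫) '' K) (σ (u - π)))
    (hvar : ∀ v ∈ K, ⟪u - π, v - π⟫ ≤ 0) : σ (u - π) ≤ ⟪π, u - π⟫ := by
  refine (isLUB_le_iff hσ).2 (Set.forall_mem_image.2 fun v hv => ?_)
  have h := hvar v hv
  rw [real_inner_comm, inner_sub_left] at h
  linarith

lemma proxObjective_sub_add_le (hσ : ∀ w, IsLUB ((⟪·, w⟫) '' K) (σ w)) (hπ : π ∈ K)
    (hvar : ∀ v ∈ K, ⟪u - π, v - π⟫ ≤ 0) (w : E) :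
    proxObjective σ u (u - π) + (1 / 2) * ‖w - (u - π)‖ ^ 2 ≤ proxObjective σ u w := by
  have hattained : σ (u - π) ≤ ⟪π, u - π⟫ := support_sub_le_inner (hσ _) hvar
  have hle : ⟪π, w⟫ ≤ σ w := (hσ w).1 (Set.mem_image_of_mem _ hπ)
  have hsplit : ‖u - w‖ ^ 2
      = ‖u - (u - π)‖ ^ 2 + 2 * ⟪π, u - π - w⟫ + ‖w - (u - π)‖ ^ 2 := by
    rw [norm_sub_rev w, sub_sub_cancel, ← norm_add_sq_real]
    congr 2
    abel
  rw [inner_sub_right] at hsplit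
  unfold proxObjective
  linarith

lemma proxObjective_sub_le (hσ : ∀ w, IsLUB ((⟪·, w⟫) '' K) (σ w)) (hπ : π ∈ K)
    (hvar : ∀ v ∈ K, ⟪u - π, v - π⟫ ≤ 0) (w : E) :
    proxObjective σ u (u - π) ≤ proxObjective σ u w :=
  le_of_add_le_of_nonneg_left (proxObjective_sub_add_le hσ hπ hvar w) (by positivity)

lemma eq_sub_of_proxObjective_le (hσ : ∀ w, IsLUB ((⟪·, w⟫) '' K) (σ w)) (hπ : π ∈ K)
    (hvar : ∀ v ∈ K, ⟪u - π, v - π⟫ ≤ 0) {w : E}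
    (hw : proxObjective σ u w ≤ proxObjective σ u (u - π)) : w = u - π := by
  have hsq : ‖w - (u - π)‖ ^ 2 ≤ 0 := by linarith [proxObjective_sub_add_le hσ hπ hvar w]
  rw [← sub_eq_zero, ← norm_eq_zero]
  exact pow_eq_zero_iff two_ne_zero |>.1 (hsq.antisymm (sq_nonneg _))

end Moreau

section Duality

variable {ι : Type*} {g : Finset ι} {r : ℝ}

lemma sum_mul_le_mul_sup_nnabs {v : ι → ℝ} (hv : ∑ j ∈ g, |v j| ≤ r) (w : ι → ℝ) :
    ∑ j ∈ g, v j * w j ≤ r * (g.sup fun j => Real.nnabs (w j) : ℝ≥0) := by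
  have hle_sup : ∀ j ∈ g, |w j| ≤ (g.sup fun j => Real.nnabs (w j) : ℝ≥0) := fun j hj => by
    rw [← Real.coe_nnabs]
    exact_mod_cast le_sup (f := fun j => Real.nnabs (w j)) hj
  calc ∑ j ∈ g, v j * w j
      ≤ ∑ j ∈ g, |v j| * (g.sup fun j => Real.nnabs (w j) : ℝ≥0) := by
        refine sum_le_sum fun j hj => (le_abs_self _).trans ?_
        rw [abs_mul]
        exact mul_le_mul_of_nonneg_left (hle_sup j hj) (abs_nonneg _)
    _ = (∑ j ∈ g, |v j|) * (g.sup fun j => Real.nnabs (w j) : ℝ≥0) := (sum_mul ..).symm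
    _ ≤ r * (g.sup fun j => Real.nnabs (w j) : ℝ≥0) := by gcongr

lemma exists_sum_mul_eq_mul_sup_nnabs (g : Finset ι) (hr : 0 ≤ r) (w : ι → ℝ) :
    ∃ v : ι → ℝ, ∑ j ∈ g, |v j| ≤ r ∧
      ∑ j ∈ g, v j * w j = r * (g.sup fun j => Real.nnabs (w j) : ℝ≥0) := by
  classical
  obtain rfl | hg := g.eq_empty_or_nonempty
  · exact ⟨0, by simpa using hr, by simp⟩
  obtain ⟨k, hk, hsup⟩ := exists_mem_eq_sup g hg fun j => Real.nnabs (w j)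
  refine ⟨Pi.single k (r * SignType.sign (w k)), ?_, ?_⟩
  · have hsign : |(SignType.sign (w k) : ℝ)| ≤ 1 := by
      cases SignType.sign (w k) <;> simp
    rw [sum_eq_single_of_mem k hk fun j _ hj => by simp [hj], Pi.single_eq_same, abs_mul,
      abs_of_nonneg hr]
    exact mul_le_of_le_one_right hr hsign
  · rw [sum_eq_single_of_mem k hk fun j _ hj => by simp [hj], Pi.single_eq_same, hsup,
      Real.coe_nnabs, mul_assoc, sign_mul_self]

end Duality

section Groups

variable {ι : Type*} {G : Finset (Finset ι)} {r : ℝ}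

/-- The penalty `Ω(w) = ∑_g ‖w_g‖_∞`, with `‖w_g‖_∞` a supremum in `ℝ≥0`, so that an empty group
contributes `0`. -/
noncomputable def groupSupNorm (G : Finset (Finset ι)) (w : ι → ℝ) : ℝ :=
  ∑ g ∈ G, ((g.sup fun j => Real.nnabs (w j) : ℝ≥0) : ℝ)

/-- The product over the groups `g ∈ G` of the `ℓ₁`-balls of radius `r`, whose support function is
`r * groupSupNorm G`. Coordinates in no group are unpenalized and therefore vanish here. -/
def groupDualBall (G : Finset (Finset ι)) (r : ℝ) : Set (EuclideanSpace ℝ ι) :=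
  {v | (∀ g ∈ G, ∑ j ∈ g, |v j| ≤ r) ∧ ∀ j, (∀ g ∈ G, j ∉ g) → v j = 0}

lemma exists_mem_groupDualBall_eqOn (hG : (G : Set (Finset ι)).PairwiseDisjoint id)
    (V : Finset ι → ι → ℝ) (hV : ∀ g ∈ G, ∑ j ∈ g, |V g j| ≤ r) :
    ∃ v ∈ groupDualBall G r, ∀ g ∈ G, ∀ j ∈ g, v j = V g j := by
  classical
  let v : EuclideanSpace ℝ ι := WithLp.toLp 2 fun j => ∑ g ∈ G with j ∈ g, V g j
  have hv : ∀ g ∈ G, ∀ j ∈ g, v j = V g j := by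
    intro g hg j hj
    refine sum_eq_single_of_mem g (mem_filter.2 ⟨hg, hj⟩) fun h hh hne => ?_
    obtain ⟨hhG, hjh⟩ := mem_filter.1 hh
    exact absurd (hG.elim_finset hhG hg j hjh hj) hne
  refine ⟨v, ⟨fun g hg => ?_, fun j hj => ?_⟩, hv⟩
  · exact (sum_congr rfl fun j hj => by rw [hv g hg j hj]).trans_le (hV g hg)
  · exact sum_eq_zero fun g hg => absurd (mem_filter.1 hg).2 (hj g (mem_filter.1 hg).1)

lemma convex_groupDualBall (G : Finset (Finset ι)) (r : ℝ) : Convex ℝ (groupDualBall G r) := by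
  rintro x ⟨hx, hx0⟩ y ⟨hy, hy0⟩ a b ha hb hab
  refine ⟨fun g hg => ?_, fun j hj => by simp [hx0 j hj, hy0 j hj]⟩
  calc ∑ j ∈ g, |a * x j + b * y j|
      ≤ ∑ j ∈ g, (a * |x j| + b * |y j|) := by
        refine sum_le_sum fun j _ => (abs_add_le _ _).trans_eq ?_
        rw [abs_mul, abs_mul, abs_of_nonneg ha, abs_of_nonneg hb]
    _ = a * ∑ j ∈ g, |x j| + b * ∑ j ∈ g, |y j| := by
        rw [sum_add_distrib, mul_sum, mul_sum]
    _ ≤ a * r + b * r := by gcongr <;> solve_by_elim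
    _ = r := by rw [← add_mul, hab, one_mul]

lemma isClosed_groupDualBall (G : Finset (Finset ι)) (r : ℝ) :
    IsClosed (groupDualBall G r) := by
  simp only [groupDualBall, Set.ofPred_and, Set.ofPred_forall]
  refine .inter (isClosed_biInter fun g _ => isClosed_le (by fun_prop) continuous_const) ?_
  exact isClosed_iInter fun j => isClosed_iInter fun _ =>
    isClosed_eq (by fun_prop) continuous_const

lemma zero_mem_groupDualBall (G : Finset (Finset ι)) (hr : 0 ≤ r) : 0 ∈ groupDualBall G r :=
  ⟨fun g _ => by simpa using hr, fun _ _ => rfl⟩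

variable [Fintype ι]

lemma sum_eq_sum_sum_of_pairwiseDisjoint {M : Type*} [AddCommMonoid M]
    (hG : (G : Set (Finset ι)).PairwiseDisjoint id) {f : ι → M}
    (hf : ∀ j, (∀ g ∈ G, j ∉ g) → f j = 0) : ∑ j, f j = ∑ g ∈ G, ∑ j ∈ g, f j := by
  classical
  calc ∑ j, f j = ∑ j ∈ G.biUnion id, f j :=
        (sum_subset (subset_univ _) fun j _ hj => hf j (by simpa using hj)).symm
    _ = ∑ g ∈ G, ∑ j ∈ g, f j := sum_biUnion hG

lemma inner_eq_sum_sum_mul_of_pairwiseDisjoint (hG : (G : Set (Finset ι)).PairwiseDisjoint id)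
    {x y : EuclideanSpace ℝ ι} (hxy : ∀ j, (∀ g ∈ G, j ∉ g) → x j * y j = 0) :
    ⟪x, y⟫ = ∑ g ∈ G, ∑ j ∈ g, x j * y j := by
  simp only [← sum_eq_sum_sum_of_pairwiseDisjoint hG hxy, PiLp.inner_apply, RCLike.inner_apply',
    conj_trivial]

lemma isGreatest_inner_groupDualBall (hG : (G : Set (Finset ι)).PairwiseDisjoint id) (hr : 0 ≤ r)
    (w : EuclideanSpace ℝ ι) :
    IsGreatest ((⟪·, w⟫) '' groupDualBall G r) (r * groupSupNorm G w) := by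
  have hinner : ∀ v ∈ groupDualBall G r, ⟪v, w⟫ = ∑ g ∈ G, ∑ j ∈ g, v j * w j :=
    fun v hv => inner_eq_sum_sum_mul_of_pairwiseDisjoint hG fun j hj => by
      rw [hv.2 j hj, zero_mul]
  rw [groupSupNorm, mul_sum]
  constructor
  · choose V hV hVw using fun g : Finset ι => exists_sum_mul_eq_mul_sup_nnabs g hr w
    obtain ⟨v, hv, hvV⟩ := exists_mem_groupDualBall_eqOn hG V fun g _ => hV g
    refine ⟨v, hv, (hinner v hv).trans (sum_congr rfl fun g hg => ?_)⟩
    rw [← hVw g]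
    exact sum_congr rfl fun j hj => by rw [hvV g hg j hj]
  · refine Set.forall_mem_image.2 fun v hv => (hinner v hv).trans_le ?_
    exact sum_le_sum fun g hg => sum_mul_le_mul_sup_nnabs (hv.1 g hg) w

variable {u π : EuclideanSpace ℝ ι} {g : Finset ι} {v : ι → ℝ}

lemma sum_sub_mul_sub_nonpos_of_mem (hG : (G : Set (Finset ι)).PairwiseDisjoint id)
    (hπ : π ∈ groupDualBall G r) (hvar : ∀ v ∈ groupDualBall G r, ⟪u - π, v - π⟫ ≤ 0)
    (hg : g ∈ G) (hv : ∑ j ∈ g, |v j| ≤ r) :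
    ∑ j ∈ g, (u j - π j) * (v j - π j) ≤ 0 := by
  classical
  -- Test the variational inequality with the competitor equal to `v` on `g` and to `π` elsewhere.
  obtain ⟨v', hv', heq⟩ := exists_mem_groupDualBall_eqOn hG (r := r)
    (Function.update (fun _ => π) g v) fun h hh => by
      obtain rfl | hne := eq_or_ne h g
      · simpa using hv
      · simpa [hne] using hπ.1 h hh
  have heq_g : ∀ j ∈ g, v' j = v j := fun j hj => by simpa using heq g hg j hj
  have heq_ne : ∀ h ∈ G, h ≠ g → ∀ j ∈ h, v' j = π j := fun h hh hne j hj => by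
    simpa [hne] using heq h hh j hj
  calc ∑ j ∈ g, (u j - π j) * (v j - π j)
      = ∑ j ∈ g, (u j - π j) * (v' j - π j) := sum_congr rfl fun j hj => by rw [heq_g j hj]
    _ = ∑ h ∈ G, ∑ j ∈ h, (u - π) j * (v' - π) j :=
        (sum_eq_single_of_mem (f := fun h => ∑ j ∈ h, (u - π) j * (v' - π) j) g hg
          fun h hh hne => sum_eq_zero fun j hj =>
            mul_eq_zero_of_right _ (sub_eq_zero.2 (heq_ne h hh hne j hj))).symm
    _ = ⟪u - π, v' - π⟫ :=
        (inner_eq_sum_sum_mul_of_pairwiseDisjoint hG fun j hj =>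
          mul_eq_zero_of_right _ (sub_eq_zero.2 ((hv'.2 j hj).trans (hπ.2 j hj).symm))).symm
    _ ≤ 0 := hvar v' hv'

end Groups

lemma sum_sub_sq_le_of_sum_sub_mul_sub_nonpos {ι : Type*} {g : Finset ι} {u π v : ι → ℝ}
    (h : ∑ j ∈ g, (u j - π j) * (v j - π j) ≤ 0) :
    ∑ j ∈ g, (u j - π j) ^ 2 ≤ ∑ j ∈ g, (u j - v j) ^ 2 := by
  calc ∑ j ∈ g, (u j - π j) ^ 2
      ≤ ∑ j ∈ g, ((u j - v j) ^ 2 + 2 * ((u j - π j) * (v j - π j))) :=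
        sum_le_sum fun j _ => by linarith [sq_nonneg (v j - π j)]
    _ = ∑ j ∈ g, (u j - v j) ^ 2 + 2 * ∑ j ∈ g, (u j - π j) * (v j - π j) := by
        rw [sum_add_distrib, mul_sum]
    _ ≤ ∑ j ∈ g, (u j - v j) ^ 2 := by linarith

/-- The objective `½‖u - w‖₂² + r Ω(w)`, in coordinates because `ι → ℝ` carries the sup norm. -/
noncomputable def groupProxObjective {ι : Type*} [Fintype ι] (G : Finset (Finset ι)) (r : ℝ)
    (u w : ι → ℝ) : ℝ :=
  (1 / 2) * ∑ j, (u j - w j) ^ 2 + r * groupSupNorm G w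

lemma proxObjective_toLp {ι : Type*} [Fintype ι] (G : Finset (Finset ι)) (r : ℝ) (u w : ι → ℝ) :
    proxObjective (fun w : EuclideanSpace ℝ ι => r * groupSupNorm G w) (WithLp.toLp 2 u)
      (WithLp.toLp 2 w) = groupProxObjective G r u w := by
  simp only [proxObjective, groupProxObjective, EuclideanSpace.real_norm_sq_eq, PiLp.sub_apply]

theorem stmt7_general {ι : Type*} [Fintype ι] (G : Finset (Finset ι))
    (hG : (G : Set (Finset ι)).PairwiseDisjoint id) {r : ℝ} (hr : 0 ≤ r) (u : ι → ℝ) :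
    ∃ ws : ι → ℝ,
      (∀ w, groupProxObjective G r u ws ≤ groupProxObjective G r u w) ∧
      (∀ w, groupProxObjective G r u w ≤ groupProxObjective G r u ws → w = ws) ∧
      (∀ g ∈ G, ∃ π : ι → ℝ,
        (∑ j ∈ g, |π j| ≤ r) ∧
        (∀ v : ι → ℝ, (∑ j ∈ g, |v j| ≤ r) →
          ∑ j ∈ g, (u j - π j) ^ 2 ≤ ∑ j ∈ g, (u j - v j) ^ 2) ∧
        (∀ j ∈ g, ws j = u j - π j) ∧
        ((∑ j ∈ g, |u j| ≤ r) → ∀ j ∈ g, ws j = 0)) ∧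
      ∀ j, (∀ g ∈ G, j ∉ g) → ws j = u j := by
  obtain ⟨π, hπ, hvar⟩ := exists_mem_forall_inner_sub_le_zero ⟨0, zero_mem_groupDualBall G hr⟩
    (isClosed_groupDualBall G r).isComplete (convex_groupDualBall G r) (WithLp.toLp 2 u)
  have hsupport := fun w => (isGreatest_inner_groupDualBall hG hr w).isLUB
  simp only [← proxObjective_toLp]
  refine ⟨fun j => u j - π j, fun w => proxObjective_sub_le hsupport hπ hvar _,
    fun w hw => ?_, fun g hg => ⟨π, hπ.1 g hg, fun v hv => ?_, fun _ _ => rfl, fun hu => ?_⟩,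
    fun j hj => ?_⟩
  · exact congrArg WithLp.ofLp (eq_sub_of_proxObjective_le hsupport hπ hvar hw)
  · exact sum_sub_sq_le_of_sum_sub_mul_sub_nonpos
      (sum_sub_mul_sub_nonpos_of_mem hG hπ hvar hg hv)
  · exact (sum_mul_self_eq_zero_iff g fun j => u j - π j).1 <|
      (sum_sub_mul_sub_nonpos_of_mem hG hπ hvar hg hu).antisymm
        (sum_nonneg fun j _ => mul_self_nonneg _)
  · exact sub_eq_self.2 (hπ.2 j hj)

/-- group thresholding for the group Lasso with non-overlapping groups
(ℓ∞-norms): the unique minimizer `w*` of `w ↦ ½‖u − w‖₂² + λ ∑_g ‖w_g‖_∞` is given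
groupwise by `w*_g = u_g − Π_{‖·‖₁ ≤ λ}(u_g)`, where `Π_{‖·‖₁ ≤ λ}` is the Euclidean
projection onto the ℓ₁-ball of radius `λ`; in particular `w*_g = 0` when
`‖u_g‖₁ ≤ λ`. The ℓ∞-norm of the group subvector is `max_{j ∈ g} |w j|`, written
via `Finset.sup` into `ℝ≥0`. -/
theorem stmt7 {p : ℕ} (G : Finset (Finset (Fin p)))
    (hne : ∀ g ∈ G, g.Nonempty)
    (hdisj : ∀ g ∈ G, ∀ h ∈ G, g ≠ h → g ∩ h = ∅)
    (hcover : ∀ j : Fin p, ∃ g ∈ G, j ∈ g)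
    (lam : ℝ) (hlam : 0 < lam) (u : Fin p → ℝ) :
    ∃ ws : Fin p → ℝ,
      (∀ w : Fin p → ℝ,
          (1/2) * ∑ j, (u j - ws j)^2
              + lam * ∑ g ∈ G, ((g.sup fun j => Real.nnabs (ws j) : NNReal) : ℝ)
          ≤ (1/2) * ∑ j, (u j - w j)^2
              + lam * ∑ g ∈ G, ((g.sup fun j => Real.nnabs (w j) : NNReal) : ℝ)) ∧
      (∀ w : Fin p → ℝ,
          (1/2) * ∑ j, (u j - w j)^2
              + lam * ∑ g ∈ G, ((g.sup fun j => Real.nnabs (w j) : NNReal) : ℝ)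
          ≤ (1/2) * ∑ j, (u j - ws j)^2
              + lam * ∑ g ∈ G, ((g.sup fun j => Real.nnabs (ws j) : NNReal) : ℝ)
          → w = ws) ∧
      (∀ g ∈ G,
        -- there is a projection `π` of `u_g` onto the ℓ₁-ball of radius `λ`
        -- and `w*` equals `u − π` on the group `g`
        ∃ π : Fin p → ℝ,
          (∑ j ∈ g, |π j| ≤ lam) ∧
          (∀ v : Fin p → ℝ, (∑ j ∈ g, |v j| ≤ lam) →
            ∑ j ∈ g, (u j - π j)^2 ≤ ∑ j ∈ g, (u j - v j)^2) ∧
          (∀ j ∈ g, ws j = u j - π j) ∧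
          ((∑ j ∈ g, |u j| ≤ lam) → ∀ j ∈ g, ws j = 0)) := by
  have hG : (G : Set (Finset (Fin p))).PairwiseDisjoint id := fun g hg h hh hgh =>
    disjoint_iff_inter_eq_empty.2 (hdisj g hg h hh hgh)
  obtain ⟨ws, hmin, huniq, hproj, -⟩ := stmt7_general G hG hlam.le u
  exact ⟨ws, hmin, huniq, hproj⟩
end

section
/- Let 𝒢 = {g₁,…,g_m} be a tree-structured group structure on {1,…,p} with positive weights (η_g), i.e., any two groups are either disjoint or one is contained in the other, and suppose the enumeration satisfies: for i < j, either g_i ⊂ g_j or g_i ∩ g_j = ∅. Let Ω(w) = Σ_{g∈𝒢} η_g ‖w_g‖_∞ and λ > 0. For each group g, let Prox^g : ℝ^p → ℝ^p be the map that leaves coordinates outside g unchanged and replaces w_g by the minimizer of v ↦ ½‖w_g − v‖₂² + λη_g‖v‖_∞. Then the proximal operator of λΩ, i.e., the map sending u to the unique minimizer of w ↦ ½‖u−w‖₂² + λΩ(w), equals the composition Prox^{g_m} ∘ ⋯ ∘ Prox^{g_1}. -/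
open Finset

/-!
For a seminorm `q` on an inner product space, the point `x` is proximal for `q` at `w` exactly when
`w - x` is a subgradient of `q` at `x`. Let `w` be proximal for another seminorm `p` at `u`. If the
passage from `w` to `x` splits `p` exactly, `p x + p (w - x) = p w`, then `u - w` is still a
subgradient of `p` at `x`; adding the two subgradients shows that `x` is proximal for `p + q` at
`u`. Splitting is inherited by sums, so the argument can be iterated.

For the sup-norm of a group `g`, the proximal point clips the coordinates in `g` at some level `τ`.
Clipping splits the sup-norm `M` of each `h ⊆ g` as `min M τ + max (M - τ) 0`, and it does not touch
a group disjoint from `g`.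
-/

open scoped InnerProductSpace NNReal

section ProximalPoint

variable {E : Type*} [NormedAddCommGroup E] [InnerProductSpace ℝ E]

/-- `x` is a value at `u` of the proximal operator of `f`. A relation rather than a function, so
that no existence or uniqueness is presupposed. -/
def IsProximalPoint (f : E → ℝ) (u x : E) : Prop :=
  ∀ w, 1 / 2 * ‖u - x‖ ^ 2 + f x ≤ 1 / 2 * ‖u - w‖ ^ 2 + f w

/-- `r` belongs to the subdifferential of `f` at `x`. -/
def IsSubgradientAt (f : E → ℝ) (r x : E) : Prop :=
  ∀ w, f x + ⟪r, w - x⟫_ℝ ≤ f w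

theorem norm_sub_sq_eq_add_sub_inner (u w x : E) :
    ‖u - w‖ ^ 2 = ‖u - x‖ ^ 2 + ‖w - x‖ ^ 2 - 2 * ⟪u - x, w - x⟫_ℝ := by
  rw [← sub_sub_sub_cancel_right u w x, norm_sub_sq_real]
  ring

theorem nonpos_of_forall_le_mul {a b : ℝ} (h : ∀ t : ℝ, 0 < t → t ≤ 1 → a ≤ t * b) : a ≤ 0 := by
  have hlim : Filter.Tendsto (fun t : ℝ => t * b) (nhdsWithin 0 (Set.Ioi 0)) (nhds 0) := by
    have hcont : Continuous fun t : ℝ => t * b := by fun_prop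
    simpa only [zero_mul] using (hcont.tendsto 0).mono_left nhdsWithin_le_nhds
  refine ge_of_tendsto hlim ?_
  filter_upwards [Ioc_mem_nhdsGT one_pos] with t ht using h t ht.1 ht.2

namespace IsSubgradientAt

variable {f g : E → ℝ} {r s u w x : E}

theorem add (hf : IsSubgradientAt f r x) (hg : IsSubgradientAt g s x) :
    IsSubgradientAt (f + g) (r + s) x := fun w => by
  have hfw := hf w
  have hgw := hg w
  simp only [Pi.add_apply, inner_add_left]
  linarith

theorem add_norm_sq_le (h : IsSubgradientAt f (u - x) x) (w : E) :
    1 / 2 * ‖u - x‖ ^ 2 + f x + 1 / 2 * ‖w - x‖ ^ 2 ≤ 1 / 2 * ‖u - w‖ ^ 2 + f w := by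
  rw [norm_sub_sq_eq_add_sub_inner u w x]
  linarith [h w]

theorem isProximalPoint (h : IsSubgradientAt f (u - x) x) : IsProximalPoint f u x := fun w => by
  linarith [h.add_norm_sq_le w, sq_nonneg ‖w - x‖]

theorem of_seminorm_add_le {p : Seminorm ℝ E} (h : IsSubgradientAt p r w)
    (hsplit : p x + p (w - x) ≤ p w) : IsSubgradientAt p r x := fun v => by
  have hinner : ⟪r, w - x⟫_ℝ ≤ p (w - x) := by
    have hreflect := h (w + (w - x))
    rw [add_sub_cancel_left] at hreflect
    linarith [map_add_le_add p w (w - x)]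
  have hv := h v
  rw [← sub_add_sub_cancel v w x, inner_add_right]
  linarith

end IsSubgradientAt

namespace IsProximalPoint

variable {f : E → ℝ} {u w x : E}

theorem isSubgradientAt (hf : ConvexOn ℝ Set.univ f) (h : IsProximalPoint f u x) :
    IsSubgradientAt f (u - x) x := fun w => by
  suffices f x + ⟪u - x, w - x⟫_ℝ - f w ≤ 0 by linarith
  refine nonpos_of_forall_le_mul (b := 1 / 2 * ‖w - x‖ ^ 2) fun t ht ht1 => ?_
  have hmin := h (x + t • (w - x))
  have hconv : f (x + t • (w - x)) ≤ (1 - t) * f x + t * f w := by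
    have hsegment : x + t • (w - x) = (1 - t) • x + t • w := by module
    rw [hsegment]
    exact hf.2 trivial trivial (sub_nonneg.2 ht1) ht.le (sub_add_cancel 1 t)
  rw [norm_sub_sq_eq_add_sub_inner u (x + t • (w - x)) x, add_sub_cancel_left, norm_smul,
    inner_smul_right, mul_pow, Real.norm_eq_abs, sq_abs] at hmin
  refine le_of_mul_le_mul_left ?_ ht
  linarith

theorem eq_of_le (hf : ConvexOn ℝ Set.univ f) (hx : IsProximalPoint f u x)
    (hw : 1 / 2 * ‖u - w‖ ^ 2 + f w ≤ 1 / 2 * ‖u - x‖ ^ 2 + f x) : w = x := by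
  have hgrowth := (hx.isSubgradientAt hf).add_norm_sq_le w
  have hsq : ‖w - x‖ ^ 2 = 0 := le_antisymm (by linarith) (sq_nonneg _)
  exact sub_eq_zero.1 (norm_eq_zero.1 (pow_eq_zero_iff two_ne_zero |>.1 hsq))

theorem seminorm_add {p q : Seminorm ℝ E} (hp : IsProximalPoint p u w)
    (hq : IsProximalPoint q w x) (hsplit : p x + p (w - x) ≤ p w) :
    IsProximalPoint (p + q : Seminorm ℝ E) u x := by
  have hpx := (hp.isSubgradientAt p.convexOn).of_seminorm_add_le hsplit
  have hqx := hq.isSubgradientAt q.convexOn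
  refine IsSubgradientAt.isProximalPoint ?_
  rw [← sub_add_sub_cancel u w x]
  exact hpx.add hqx

end IsProximalPoint

theorem isProximalPoint_foldl {m : ℕ} {p : Fin m → Seminorm ℝ E} {Q : Fin m → E → E}
    (hQ : ∀ i w, IsProximalPoint (p i) w (Q i w))
    (hsplit : ∀ i j, i < j → ∀ w, p i (Q j w) + p i (w - Q j w) ≤ p i w) (u : E) :
    IsProximalPoint (∑ i, p i : Seminorm ℝ E) u (Fin.foldl m (fun w i => Q i w) u) := by
  induction m with
  | zero => exact fun w => by simp
  | succ m ih =>
    rw [Fin.foldl_succ_last, Fin.sum_univ_castSucc]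
    refine (ih (fun i => hQ i.castSucc) fun i j hij => ?_).seminorm_add (hQ _ _) ?_
    · exact hsplit _ _ (Fin.castSucc_lt_castSucc_iff.2 hij)
    · simp only [_root_.sum_apply, ← Finset.sum_add_distrib]
      exact Finset.sum_le_sum fun i _ => hsplit _ _ (Fin.castSucc_lt_last i) _

end ProximalPoint

section GroupSeminorm

variable {ι : Type*} {g h : Finset ι} {τ : ℝ}

/-- The sup-norm of the coordinates in the group `g`, as a seminorm on Euclidean space. -/
noncomputable def groupSeminorm (g : Finset ι) : Seminorm ℝ (EuclideanSpace ℝ ι) :=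
  g.sup fun j => (normSeminorm ℝ ℝ).comp (EuclideanSpace.projₗ j)

theorem groupSeminorm_toLp {p : ℕ} (g : Finset (Fin p)) (w : Fin p → ℝ) :
    groupSeminorm g (WithLp.toLp 2 w) = gsup g w :=
  Seminorm.finset_sup_apply _ _ _

theorem abs_le_groupSeminorm (w : EuclideanSpace ℝ ι) {j : ι} (hj : j ∈ g) :
    |w j| ≤ groupSeminorm g w :=
  Seminorm.le_finset_sup_apply (p := fun j => (normSeminorm ℝ ℝ).comp (EuclideanSpace.projₗ j)) hj

theorem groupSeminorm_le {w : EuclideanSpace ℝ ι} (hτ : 0 ≤ τ) (hw : ∀ j ∈ g, |w j| ≤ τ) :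
    groupSeminorm g w ≤ τ :=
  Seminorm.finset_sup_apply_le hτ hw

section Clip

variable [DecidableEq ι]

/-- The vector obtained from `w` by projecting the coordinates in `g` onto `[-τ, τ]`. For `τ < 0`
these coordinates take the junk value `-τ`. -/
noncomputable def groupClip (g : Finset ι) (τ : ℝ) (w : EuclideanSpace ℝ ι) :
    EuclideanSpace ℝ ι :=
  WithLp.toLp 2 (g.piecewise (fun j => max (-τ) (min (w j) τ)) w)

theorem groupClip_apply_of_mem (w : EuclideanSpace ℝ ι) {j : ι} (hj : j ∈ g) :
    groupClip g τ w j = max (-τ) (min (w j) τ) :=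
  g.piecewise_eq_of_mem (fun j => max (-τ) (min (w j) τ)) w hj

theorem groupClip_apply_of_notMem (w : EuclideanSpace ℝ ι) {j : ι} (hj : j ∉ g) :
    groupClip g τ w j = w j :=
  g.piecewise_eq_of_notMem (fun j => max (-τ) (min (w j) τ)) w hj

theorem abs_groupClip_apply (hτ : 0 ≤ τ) (w : EuclideanSpace ℝ ι) {j : ι} (hj : j ∈ g) :
    |groupClip g τ w j| = min |w j| τ := by
  rw [groupClip_apply_of_mem w hj]
  grind

theorem abs_sub_groupClip_apply (hτ : 0 ≤ τ) (w : EuclideanSpace ℝ ι) {j : ι} (hj : j ∈ g) :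
    |w j - groupClip g τ w j| = max (|w j| - τ) 0 := by
  rw [groupClip_apply_of_mem w hj]
  grind

theorem groupSeminorm_groupClip_le (hτ : 0 ≤ τ) (w : EuclideanSpace ℝ ι) (hhg : h ⊆ g) :
    groupSeminorm h (groupClip g τ w) ≤ min (groupSeminorm h w) τ := by
  refine groupSeminorm_le (le_min (apply_nonneg _ _) hτ) fun j hj => ?_
  rw [abs_groupClip_apply hτ w (hhg hj)]
  exact min_le_min_right τ (abs_le_groupSeminorm w hj)

theorem groupSeminorm_sub_groupClip_le (hτ : 0 ≤ τ) (w : EuclideanSpace ℝ ι) (hhg : h ⊆ g) :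
    groupSeminorm h (w - groupClip g τ w) ≤ max (groupSeminorm h w - τ) 0 := by
  refine groupSeminorm_le (le_max_right _ _) fun j hj => ?_
  rw [PiLp.sub_apply, abs_sub_groupClip_apply hτ w (hhg hj)]
  exact max_le_max_right 0 (sub_le_sub_right (abs_le_groupSeminorm w hj) τ)

theorem groupSeminorm_groupClip_add_le_of_subset (hτ : 0 ≤ τ) (w : EuclideanSpace ℝ ι)
    (hhg : h ⊆ g) :
    groupSeminorm h (groupClip g τ w) + groupSeminorm h (w - groupClip g τ w)
      ≤ groupSeminorm h w :=
  calc
    _ ≤ min (groupSeminorm h w) τ + max (groupSeminorm h w - τ) 0 :=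
      add_le_add (groupSeminorm_groupClip_le hτ w hhg) (groupSeminorm_sub_groupClip_le hτ w hhg)
    _ = groupSeminorm h w := by grind

theorem groupSeminorm_groupClip_add_le_of_disjoint (w : EuclideanSpace ℝ ι)
    (hhg : Disjoint h g) :
    groupSeminorm h (groupClip g τ w) + groupSeminorm h (w - groupClip g τ w)
      ≤ groupSeminorm h w := by
  have hclip {j : ι} (hj : j ∈ h) : groupClip g τ w j = w j :=
    groupClip_apply_of_notMem w (Finset.disjoint_left.1 hhg hj)
  have hle : groupSeminorm h (groupClip g τ w) ≤ groupSeminorm h w :=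
    groupSeminorm_le (apply_nonneg _ _) fun j hj => by
      rw [hclip hj]
      exact abs_le_groupSeminorm w hj
  have hsub : groupSeminorm h (w - groupClip g τ w) ≤ 0 :=
    groupSeminorm_le le_rfl fun j hj => by
      rw [PiLp.sub_apply, hclip hj, sub_self, abs_zero]
  linarith

theorem norm_sub_groupClip_sq_le [Fintype ι] (w : EuclideanSpace ℝ ι) {x : EuclideanSpace ℝ ι}
    (hx : groupSeminorm g x ≤ τ) : ‖w - groupClip g τ w‖ ^ 2 ≤ ‖w - x‖ ^ 2 := by
  simp only [EuclideanSpace.real_norm_sq_eq, PiLp.sub_apply]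
  refine Finset.sum_le_sum fun j _ => sq_le_sq.2 ?_
  by_cases hj : j ∈ g
  · rw [abs_sub_groupClip_apply ((apply_nonneg _ _).trans hx) w hj]
    refine max_le ?_ (abs_nonneg _)
    linarith [abs_le_groupSeminorm x hj, abs_sub_abs_le_abs_sub (w j) (x j)]
  · rw [groupClip_apply_of_notMem w hj, sub_self, abs_zero]
    exact abs_nonneg _

theorem IsProximalPoint.groupClip_eq [Fintype ι] {c : ℝ≥0} {w x : EuclideanSpace ℝ ι}
    (hx : IsProximalPoint (c • groupSeminorm g) w x) :
    groupClip g (groupSeminorm g x) w = x := by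
  refine hx.eq_of_le (c • groupSeminorm g).convexOn (add_le_add ?_ ?_)
  · exact mul_le_mul_of_nonneg_left (norm_sub_groupClip_sq_le w le_rfl) (by norm_num)
  · refine mul_le_mul_of_nonneg_left ?_ c.coe_nonneg
    exact (groupSeminorm_groupClip_le (apply_nonneg _ _) w subset_rfl).trans (min_le_right _ _)

end Clip

variable [Fintype ι]

theorem IsProximalPoint.groupSeminorm_add_le {c : ℝ≥0} {w x : EuclideanSpace ℝ ι}
    (hx : IsProximalPoint (c • groupSeminorm g) w x) (hhg : h ⊆ g ∨ Disjoint h g) :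
    groupSeminorm h x + groupSeminorm h (w - x) ≤ groupSeminorm h w := by
  classical
  rw [← hx.groupClip_eq]
  rcases hhg with hsub | hdisj
  · exact groupSeminorm_groupClip_add_le_of_subset (apply_nonneg _ _) w hsub
  · exact groupSeminorm_groupClip_add_le_of_disjoint w hdisj

theorem isProximalPoint_foldl_groupSeminorm {m : ℕ} {g : Fin m → Finset ι} {c : Fin m → ℝ≥0}
    (htree : ∀ i j, i < j → g i ⊆ g j ∨ Disjoint (g i) (g j))
    {Q : Fin m → EuclideanSpace ℝ ι → EuclideanSpace ℝ ι}
    (hQ : ∀ i w, IsProximalPoint (c i • groupSeminorm (g i)) w (Q i w))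
    (u : EuclideanSpace ℝ ι) :
    IsProximalPoint (∑ i, c i • groupSeminorm (g i) : Seminorm ℝ (EuclideanSpace ℝ ι)) u
      (Fin.foldl m (fun w i => Q i w) u) := by
  refine isProximalPoint_foldl hQ (fun i j hij w => ?_) u
  have hsplit := (hQ j w).groupSeminorm_add_le (htree i j hij)
  simpa only [smul_apply, NNReal.smul_def, smul_eq_mul, mul_add] using
    mul_le_mul_of_nonneg_left hsplit (c i).coe_nonneg

end GroupSeminorm

section Coordinates

variable {p : ℕ}

theorem norm_toLp_sub_sq (u w : Fin p → ℝ) :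
    ‖WithLp.toLp 2 u - WithLp.toLp 2 w‖ ^ 2 = ∑ j, (u j - w j) ^ 2 :=
  EuclideanSpace.real_norm_sq_eq _

theorem isProximalPoint_toLp_of_group {g : Finset (Fin p)} {c : ℝ≥0} {w x : Fin p → ℝ}
    (hout : ∀ j, j ∉ g → x j = w j)
    (hmin : ∀ v : Fin p → ℝ, (1 / 2) * ∑ j ∈ g, (w j - x j) ^ 2 + c * gsup g x
      ≤ (1 / 2) * ∑ j ∈ g, (w j - v j) ^ 2 + c * gsup g v) :
    IsProximalPoint (c • groupSeminorm g) (WithLp.toLp 2 w) (WithLp.toLp 2 x) := by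
  intro v
  obtain ⟨v, rfl⟩ := WithLp.toLp_surjective 2 v
  have hx : ∑ j, (w j - x j) ^ 2 = ∑ j ∈ g, (w j - x j) ^ 2 :=
    (Finset.sum_subset g.subset_univ fun j _ hj => by rw [hout j hj, sub_self, sq, zero_mul]).symm
  have hv : ∑ j ∈ g, (w j - v j) ^ 2 ≤ ∑ j, (w j - v j) ^ 2 :=
    Finset.sum_le_univ_sum_of_nonneg fun j => sq_nonneg _
  simp only [smul_apply, NNReal.smul_def, smul_eq_mul, groupSeminorm_toLp, norm_toLp_sub_sq, hx]
  linarith [hmin v]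

theorem sum_smul_groupSeminorm_toLp {m : ℕ} (g : Fin m → Finset (Fin p)) (c : Fin m → ℝ≥0)
    (w : Fin p → ℝ) :
    (∑ i, c i • groupSeminorm (g i)) (WithLp.toLp 2 w) = ∑ i, c i * gsup (g i) w := by
  simp only [_root_.sum_apply, smul_apply, NNReal.smul_def, smul_eq_mul, groupSeminorm_toLp]

end Coordinates

/-- for a tree-structured group structure `g₁,…,g_m` (ordered so that
for `i < j`, either `g_i ⊂ g_j` or `g_i ∩ g_j = ∅`), the proximal operator of
`λΩ` with `Ω(w) = ∑_i η_i ‖w_{g_i}‖_∞` is the composition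
`Prox^{g_m} ∘ ⋯ ∘ Prox^{g_1}` of the elementary group-wise proximal maps. -/
theorem stmt8 {p m : ℕ} (g : Fin m → Finset (Fin p)) (η : Fin m → ℝ)
    (hne : ∀ i, (g i).Nonempty) (hη : ∀ i, 0 < η i)
    (htree : ∀ i j : Fin m, i < j → g i ⊂ g j ∨ g i ∩ g j = ∅)
    (lam : ℝ) (hlam : 0 < lam)
    (P : Fin m → (Fin p → ℝ) → (Fin p → ℝ))
    (hP : ∀ (i : Fin m) (w : Fin p → ℝ),
      (∀ j, j ∉ g i → P i w j = w j) ∧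
      (∀ v : Fin p → ℝ,
        (1/2) * ∑ j ∈ g i, (w j - P i w j)^2 + lam * η i * gsup (g i) (P i w)
          ≤ (1/2) * ∑ j ∈ g i, (w j - v j)^2 + lam * η i * gsup (g i) v))
    (u : Fin p → ℝ) :
    (∀ w : Fin p → ℝ,
        (1/2) * ∑ j, (u j - Fin.foldl m (fun w' i => P i w') u j)^2
            + lam * ∑ i, η i * gsup (g i) (Fin.foldl m (fun w' i => P i w') u)
        ≤ (1/2) * ∑ j, (u j - w j)^2 + lam * ∑ i, η i * gsup (g i) w) ∧
    (∀ w : Fin p → ℝ,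
        (1/2) * ∑ j, (u j - w j)^2 + lam * ∑ i, η i * gsup (g i) w
        ≤ (1/2) * ∑ j, (u j - Fin.foldl m (fun w' i => P i w') u j)^2
            + lam * ∑ i, η i * gsup (g i) (Fin.foldl m (fun w' i => P i w') u)
        → w = Fin.foldl m (fun w' i => P i w') u) := by
  obtain ⟨c, hc⟩ : ∃ c : Fin m → ℝ≥0, ∀ i, (c i : ℝ) = lam * η i :=
    ⟨fun i => ⟨lam * η i, (mul_pos hlam (hη i)).le⟩, fun _ => rfl⟩
  simp only [← hc] at hP
  have htree' (i j : Fin m) (hij : i < j) : g i ⊆ g j ∨ Disjoint (g i) (g j) :=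
    (htree i j hij).imp (·.subset) Finset.disjoint_iff_inter_eq_empty.2
  have hfold : WithLp.toLp 2 (Fin.foldl m (fun w i => P i w) u) =
      Fin.foldl m (fun w i => WithLp.toLp 2 (P i w.ofLp)) (WithLp.toLp 2 u) := by
    simp only [Fin.foldl_eq_foldl_finRange]
    exact (List.foldl_hom (WithLp.toLp 2) fun _ _ => rfl).symm
  have hprox := isProximalPoint_foldl_groupSeminorm htree' (fun i w =>
    isProximalPoint_toLp_of_group (hP i w.ofLp).1 (hP i w.ofLp).2) (WithLp.toLp 2 u)
  rw [← hfold] at hprox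
  have hobjective (w : Fin p → ℝ) :
      (1/2) * ∑ j, (u j - w j)^2 + lam * ∑ i, η i * gsup (g i) w =
        1 / 2 * ‖WithLp.toLp 2 u - WithLp.toLp 2 w‖ ^ 2
          + (∑ i, c i • groupSeminorm (g i)) (WithLp.toLp 2 w) := by
    rw [norm_toLp_sub_sq, sum_smul_groupSeminorm_toLp, Finset.mul_sum univ _ lam]
    simp only [hc, mul_assoc]
  simp only [hobjective]
  exact ⟨fun w => hprox _, fun w hw =>
    WithLp.toLp_injective 2 (hprox.eq_of_le (Seminorm.convexOn _) hw)⟩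
end
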